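/- Let A and B be disjoint nonempty subsets of V with |𝔛_v| ≥ 2 for all v ∈ V, and let ∅ ≠ L ⊆ B. For x_L ∈ 𝔛_L define f_L(x_L) = Σ_{L' ⊆ L} (−1)^{|L∖L'|} (1/|𝔛_{(A∪B)∖L'}|) Σ_{j ∈ 𝔛_{A∪B} : j_{L'} = x_{L'}} log( p_{A∪B}(j) / p_B(j_B) ). Then: (a) λ_L^{A∪B}(x_L) = λ_L^B(x_L) + f_L(x_L) for all x_L ∈ 𝔛_L; and (b) if there exists v ∈ L such that X_A ⟂ X_v | X_{B∖{v}}, then f_L(x_L) = 0 for all x_L, so that λ_L^{A∪B}(x_L) = λ_L^B(x_L) for all x_L. -/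

import Mathlib

open Finset

variable {V : Type*} [Fintype V] [DecidableEq V]
variable {𝔛 : V → Type*} [∀ v, Fintype (𝔛 v)] [∀ v, DecidableEq (𝔛 v)]
  [∀ v, Nonempty (𝔛 v)]

/-- The marginal `p_A` of a distribution `p` on the full table, evaluated at the
`A`-coordinates of `x`. -/
noncomputable def margin (p : (∀ v, 𝔛 v) → ℝ) (A : Finset V) (x : ∀ v, 𝔛 v) : ℝ :=
  ∑ y ∈ Finset.univ.filter (fun y : ∀ v, 𝔛 v => ∀ v ∈ A, y v = x v), p y

/-- `ν_L^M(x_L) = (1/|𝔛_{M∖L}|) Σ_{j ∈ 𝔛_M : j_L = x_L} log p_M(j)`, written with sums over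
full configurations (for `L ⊆ M` the extra coordinates cancel against the normalization). -/
noncomputable def nu (p : (∀ v, 𝔛 v) → ℝ) (L M : Finset V) (x : ∀ v, 𝔛 v) : ℝ :=
  (∏ v ∈ Lᶜ, (Fintype.card (𝔛 v) : ℝ))⁻¹ *
    ∑ j ∈ Finset.univ.filter (fun j : ∀ v, 𝔛 v => ∀ v ∈ L, j v = x v),
      Real.log (margin p M j)

/-- The marginal log-linear parameter `λ_L^M(x_L) = Σ_{L' ⊆ L} (−1)^{|L∖L'|} ν_{L'}^M(x_{L'})`. -/
noncomputable def mll (p : (∀ v, 𝔛 v) → ℝ) (L M : Finset V) (x : ∀ v, 𝔛 v) : ℝ :=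
  ∑ L' ∈ L.powerset, (-1 : ℝ) ^ ((L \ L').card) * nu p L' M x

/-- `X_A ⟂ X_B | X_C`: `p_{A∪B∪C}·p_C = p_{A∪C}·p_{B∪C}` pointwise. -/
def CondIndep (p : (∀ v, 𝔛 v) → ℝ) (A B C : Finset V) : Prop :=
  ∀ x : ∀ v, 𝔛 v,
    margin p (A ∪ B ∪ C) x * margin p C x = margin p (A ∪ C) x * margin p (B ∪ C) x

/-- `f_L(x_L) = Σ_{L' ⊆ L} (−1)^{|L∖L'|} (1/|𝔛_{(A∪B)∖L'}|)
Σ_{j ∈ 𝔛_{A∪B} : j_{L'} = x_{L'}} log(p_{A∪B}(j)/p_B(j_B))`, written with sums over full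
configurations (for `L' ⊆ A ∪ B` the extra coordinates cancel against the normalization). -/
noncomputable def fpar (p : (∀ v, 𝔛 v) → ℝ) (A B L : Finset V) (x : ∀ v, 𝔛 v) : ℝ :=
  ∑ L' ∈ L.powerset, (-1 : ℝ) ^ ((L \ L').card) *
    ((∏ v ∈ L'ᶜ, (Fintype.card (𝔛 v) : ℝ))⁻¹ *
      ∑ j ∈ Finset.univ.filter (fun j : ∀ v, 𝔛 v => ∀ v ∈ L', j v = x v),
        Real.log (margin p (A ∪ B) j / margin p B j))

theorem margin_pos' (p : (∀ v, 𝔛 v) → ℝ) (hp : ∀ x, 0 < p x) (A : Finset V) (x : ∀ v, 𝔛 v) :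
    0 < margin p A x := by
  unfold margin
  apply Finset.sum_pos (fun y _ => hp y)
  exact ⟨x, by simp⟩

theorem margin_update (p : (∀ v, 𝔛 v) → ℝ) (A : Finset V) (x : ∀ v, 𝔛 v) (v : V) (hv : v ∉ A)
    (a : 𝔛 v) : margin p A (Function.update x v a) = margin p A x := by
  unfold margin
  congr 1
  ext y
  simp only [Finset.mem_filter, Finset.mem_univ, true_and]
  refine forall₂_congr fun w hw => ?_
  have : w ≠ v := fun h => hv (h ▸ hw)
  rw [Function.update_of_ne this]

theorem sum_insert_coord (g : (∀ v, 𝔛 v) → ℝ) (v : V)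
    (hg : ∀ j a, g (Function.update j v a) = g j) (T : Finset V) (hv : v ∉ T) (x : ∀ v, 𝔛 v) :
    ∑ j ∈ Finset.univ.filter (fun j : ∀ v, 𝔛 v => ∀ w ∈ T, j w = x w), g j =
      (Fintype.card (𝔛 v) : ℝ) *
      ∑ j ∈ Finset.univ.filter (fun j : ∀ v, 𝔛 v => ∀ w ∈ insert v T, j w = x w), g j := by
  rw [← Finset.sum_fiberwise _ (fun j => j v)]
  have key : ∀ a : 𝔛 v,
      ∑ j ∈ (Finset.univ.filter (fun j : ∀ v, 𝔛 v => ∀ w ∈ T, j w = x w)).filter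
        (fun j => j v = a), g j =
      ∑ j ∈ Finset.univ.filter (fun j : ∀ v, 𝔛 v => ∀ w ∈ insert v T, j w = x w), g j := by
    intro a
    refine Finset.sum_nbij' (fun j => Function.update j v (x v))
      (fun j => Function.update j v a) ?_ ?_ ?_ ?_ ?_
    · intro j hj
      simp only [Finset.mem_filter, Finset.mem_univ, true_and, Finset.forall_mem_insert] at hj ⊢
      refine ⟨by simp, fun w hw => ?_⟩
      rw [Function.update_of_ne (show w ≠ v from fun h => hv (h ▸ hw))]
      exact hj.1 w hw
    · intro j hj
      simp only [Finset.mem_filter, Finset.mem_univ, true_and, Finset.forall_mem_insert] at hj ⊢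
      refine ⟨fun w hw => ?_, by simp⟩
      rw [Function.update_of_ne (show w ≠ v from fun h => hv (h ▸ hw))]
      exact hj.2 w hw
    · intro j hj
      simp only [Finset.mem_filter, Finset.mem_univ, true_and] at hj
      simp [← hj.2]
    · intro j hj
      simp only [Finset.mem_filter, Finset.mem_univ, true_and, Finset.forall_mem_insert] at hj
      simp [← hj.1]
    · intro j _
      exact (hg j _).symm
  rw [Finset.sum_congr rfl (fun a _ => key a)]
  simp

theorem stmt17 (p : (∀ v, 𝔛 v) → ℝ) (hp : ∀ x, 0 < p x) (hsum : ∑ x, p x = 1)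
    (hcard : ∀ v : V, 2 ≤ Fintype.card (𝔛 v))
    (A B L : Finset V) (hA : A.Nonempty) (hB : B.Nonempty) (hAB : Disjoint A B)
    (hL : L.Nonempty) (hLB : L ⊆ B) :
    (∀ x : ∀ v, 𝔛 v, mll p L (A ∪ B) x = mll p L B x + fpar p A B L x) ∧
    ((∃ v ∈ L, CondIndep p A {v} (B \ {v})) →
      ∀ x : ∀ v, 𝔛 v, fpar p A B L x = 0 ∧ mll p L (A ∪ B) x = mll p L B x) := by
  have ha : ∀ x : ∀ v, 𝔛 v, mll p L (A ∪ B) x = mll p L B x + fpar p A B L x := by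
    intro x
    unfold mll fpar nu
    rw [← Finset.sum_add_distrib]
    refine Finset.sum_congr rfl fun T _ => ?_
    rw [← mul_add, ← mul_add, ← Finset.sum_add_distrib]
    congr 2
    refine Finset.sum_congr rfl fun j _ => ?_
    rw [Real.log_div (margin_pos' p hp _ _).ne' (margin_pos' p hp _ _).ne']
    ring
  refine ⟨ha, ?_⟩
  rintro ⟨v, hvL, hci⟩ x
  suffices hf : fpar p A B L x = 0 by
    exact ⟨hf, by rw [ha, hf, add_zero]⟩
  have hvB : v ∈ B := hLB hvL
  have hvA : v ∉ A := fun h => (Finset.disjoint_left.mp hAB h) hvB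
  have h1 : ∀ j, Real.log (margin p (A ∪ B) j / margin p B j) =
      Real.log (margin p (A ∪ (B \ {v})) j / margin p (B \ {v}) j) := by
    intro j
    have h := hci j
    have e1 : {v} ∪ (B \ {v}) = B := by
      ext w
      by_cases hw : w = v <;> simp [hw, hvB]
    rw [Finset.union_assoc, e1] at h
    congr 1
    rw [div_eq_div_iff (margin_pos' p hp _ _).ne' (margin_pos' p hp _ _).ne']
    exact h
  have hg : ∀ (j : ∀ v, 𝔛 v) (a : 𝔛 v),
      Real.log (margin p (A ∪ B) (Function.update j v a) / margin p B (Function.update j v a)) =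
      Real.log (margin p (A ∪ B) j / margin p B j) := by
    intro j a
    rw [h1, h1, margin_update _ _ _ _ (by simp [hvA]), margin_update _ _ _ _ (by simp)]
  have hvE : v ∉ L.erase v := Finset.notMem_erase v L
  unfold fpar
  rw [show L.powerset = (insert v (L.erase v)).powerset by rw [Finset.insert_erase hvL],
    Finset.sum_powerset_insert hvE, ← Finset.sum_add_distrib]
  refine Finset.sum_eq_zero fun T hT => ?_
  have hTE := Finset.mem_powerset.mp hT
  have hvT : v ∉ T := fun h => hvE (hTE h)
  have c1 : L \ T = insert v (L \ insert v T) := by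
    ext w
    by_cases hw : w = v <;> simp [hw, hvL, hvT]
  have c2 : (Tᶜ : Finset V) = insert v (insert v T)ᶜ := by
    ext w
    by_cases hw : w = v <;> simp [hw, hvT]
  rw [sum_insert_coord (fun j => Real.log (margin p (A ∪ B) j / margin p B j)) v hg T hvT x, c1,
    c2, Finset.card_insert_of_notMem (by simp), Finset.prod_insert (by simp), pow_succ]
  have hc : (Fintype.card (𝔛 v) : ℝ) ≠ 0 := by
    have := hcard v
    positivity
  rw [mul_inv]
  field_simp
  ring
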